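/- arXiv:1802.10007 — 2 statements merged into one kernel-verified Lean document; each statement's English description precedes it below -/
import Mathlib

section
/- Bob's undetectable measurement in the naive protocol (Section 3 of the paper): Let q ≥ 1 and let σ, τ be permutations of Fin (3q). Define ψ₁, ψ₂ : (Fin (3q) → Bool) → ℂ by ψ₁(x) = 2^{−q/2} if x(σ(i)) = false for every i < 2q and ψ₁(x) = 0 otherwise, and ψ₂(x) = 2^{−q/2} if x(τ(i)) = true for every i < 2q and ψ₂(x) = 0 otherwise (these are the computational-basis amplitude functions of U_σ|0⟩^{⊗2q}|+⟩^{⊗q} and U_τ|1⟩^{⊗2q}|+⟩^{⊗q}). Let Π₁ be the diagonal projection acting by (Π₁ ψ)(x) = ψ(x) if the number of indices i with x(i) = false is strictly greater than 3q/2, and (Π₁ ψ)(x) = 0 otherwise. Then Π₁ ψ₁ = ψ₁ and Π₁ ψ₂ = 0. Consequently Bob can distinguish ψ₁ from ψ₂ with certainty without disturbing either state. -/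
/-!
A string in the support of `ψ₁` has at least `2q` zeros, and one in the support of `ψ₂` has at
least `2q` ones, hence at most `q` zeros (`two_mul_le_card_of_forall`). As `q < 3q/2 < 2q` for
`q ≥ 1`, the threshold `3q/2` on the number of zeros separates the two supports, so the diagonal
projection `Π₁` is the identity on the first and zero on the second.
-/

/-- Amplitude function of the state `U_σ |0⟩^{⊗2q} |+⟩^{⊗q}` on `3q` qubits:
amplitude `2^{-q/2}` on basis strings whose coordinates `σ(i)`, `i < 2q`, are
all `false`, and `0` elsewhere. -/
noncomputable def psiOne (q : ℕ) (σ : Equiv.Perm (Fin (3 * q))) :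
    (Fin (3 * q) → Bool) → ℂ := fun x =>
  if ∀ i : Fin (3 * q), (i : ℕ) < 2 * q → x (σ i) = false
    then ((Real.sqrt 2 : ℂ))⁻¹ ^ q else 0

/-- Amplitude function of the state `U_τ |1⟩^{⊗2q} |+⟩^{⊗q}` on `3q` qubits. -/
noncomputable def psiTwo (q : ℕ) (τ : Equiv.Perm (Fin (3 * q))) :
    (Fin (3 * q) → Bool) → ℂ := fun x =>
  if ∀ i : Fin (3 * q), (i : ℕ) < 2 * q → x (τ i) = true
    then ((Real.sqrt 2 : ℂ))⁻¹ ^ q else 0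

/-- The diagonal projection `Π₁` onto basis strings having strictly more than
`3q/2` coordinates equal to `false` (i.e. strictly more than `3q/2` zeros). -/
def projOne (q : ℕ) : ((Fin (3 * q) → Bool) → ℂ) → ((Fin (3 * q) → Bool) → ℂ) :=
  fun ψ x =>
    if 3 * q < 2 * (Finset.univ.filter (fun i : Fin (3 * q) => x i = false)).card
      then ψ x else 0

/-- A string that takes the value `b` at `σ i` for all `i < 2q` takes it at least `2q` times:
the injective map `σ` embeds the first `2q` indices into the positions where `x` equals `b`. -/
theorem two_mul_le_card_of_forall {q : ℕ} (σ : Equiv.Perm (Fin (3 * q)))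
    {x : Fin (3 * q) → Bool} {b : Bool}
    (h : ∀ i : Fin (3 * q), (i : ℕ) < 2 * q → x (σ i) = b) :
    2 * q ≤ (Finset.univ.filter (fun i : Fin (3 * q) => x i = b)).card := by
  have hle : 2 * q ≤ 3 * q := by omega
  have hcard := Finset.card_le_card_of_injOn
    (s := (Finset.univ : Finset (Fin (2 * q))))
    (t := Finset.univ.filter (fun i : Fin (3 * q) => x i = b))
    (fun i => σ (Fin.castLE hle i))
    (fun i _ => by simpa using h (Fin.castLE hle i) (by simp))
    (fun i _ j _ hij => Fin.castLE_injective hle (σ.injective hij))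
  simpa using hcard

/-- Bob's undetectable measurement in the naive protocol (Section 3):
`Π₁` fixes `ψ₁` and annihilates `ψ₂`, so Bob can distinguish the two seal
states with certainty without disturbing them. -/
theorem naive_protocol_fails (q : ℕ) (hq : 1 ≤ q)
    (σ τ : Equiv.Perm (Fin (3 * q))) :
    projOne q (psiOne q σ) = psiOne q σ ∧ projOne q (psiTwo q τ) = 0 := by
  constructor
  · funext x
    unfold projOne psiOne
    split_ifs with h₁ h₂ h₂
    · rfl
    · rfl
    · have := two_mul_le_card_of_forall σ h₂
      omega
    · rfl
  · funext x
    unfold projOne psiTwo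
    split_ifs with h₁ h₂
    · have hones := two_mul_le_card_of_forall τ h₂
      have hsum := Finset.card_filter_add_card_filter_not
        (s := (Finset.univ : Finset (Fin (3 * q)))) (fun i => x i = false)
      simp only [Bool.not_eq_false, Finset.card_univ, Fintype.card_fin] at hsum
      omega
    · rfl
    · rfl
end

section
/- Optimality of the computational-basis measurement for the single-qubit seal states (Section 5 of the paper, an instance of the Helstrom bound): Fix 1/2 ≤ p ≤ 1 and φ ∈ ℝ, and define the unit vectors ψ₁ = (√p, e^{iφ}·√(1−p)) and ψ₂ = (√(1−p), e^{iφ}·√p) in ℂ². Then for every 2×2 complex matrix A with 0 ≤ A ≤ 1 in the Loewner order, (1/2)·Re(ψ₁ᴴ · (A · ψ₁)) + (1/2)·Re(ψ₂ᴴ · ((1 − A) · ψ₂)) ≤ p. In words, no two-outcome measurement distinguishes ψ₁ from ψ₂ (given with equal priors) with success probability exceeding p. -/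
/-!
The off-diagonal entries of `ψ₁ψ₁ᴴ` and `ψ₂ψ₂ᴴ` agree (both involve `√p √(1-p) e^{±iφ}`), so
`ψ₁ψ₁ᴴ - ψ₂ψ₂ᴴ = (2p - 1) diag(1, -1)`. Hence the success probability equals
`1/2 + (2p - 1)/2 * (A₀₀ - A₁₁)`, and `A₀₀ ≤ 1`, `0 ≤ A₁₁`, `1/2 ≤ p` bound it by `p`.
-/

open Matrix ComplexOrder

/-- Optimality of the computational-basis measurement for the single-qubit seal
states (Section 5, an instance of the Helstrom bound). -/
theorem helstrom_single_qubit_seal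
    (p : ℝ) (hp0 : 1 / 2 ≤ p) (hp1 : p ≤ 1) (φ : ℝ)
    (ψ₁ ψ₂ : Fin 2 → ℂ)
    (hψ₁ : ψ₁ = ![(Real.sqrt p : ℂ),
      Complex.exp (φ * Complex.I) * (Real.sqrt (1 - p) : ℂ)])
    (hψ₂ : ψ₂ = ![(Real.sqrt (1 - p) : ℂ),
      Complex.exp (φ * Complex.I) * (Real.sqrt p : ℂ)])
    (A : Matrix (Fin 2) (Fin 2) ℂ) (hA : A.PosSemidef) (hA1 : (1 - A).PosSemidef) :
    (1 / 2) * (star ψ₁ ⬝ᵥ (A *ᵥ ψ₁)).re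
      + (1 / 2) * (star ψ₂ ⬝ᵥ ((1 - A) *ᵥ ψ₂)).re ≤ p := by
  have h11 : 0 ≤ (A 1 1).re := (Complex.le_def.mp (hA.diag_nonneg (i := 1))).1
  have h00 : (A 0 0).re ≤ 1 := by
    have h := (Complex.le_def.mp (hA1.diag_nonneg (i := 0))).1
    simp at h
    linarith
  have hu : (Complex.exp (φ * Complex.I)).re ^ 2 + (Complex.exp (φ * Complex.I)).im ^ 2 = 1 := by
    rw [Complex.exp_ofReal_mul_I_re, Complex.exp_ofReal_mul_I_im]
    exact Real.cos_sq_add_sin_sq φ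
  have ha : Real.sqrt p ^ 2 = p := Real.sq_sqrt (by linarith)
  have hb : Real.sqrt (1 - p) ^ 2 = 1 - p := Real.sq_sqrt (by linarith)
  have key : (1 / 2) * (star ψ₁ ⬝ᵥ (A *ᵥ ψ₁)).re
      + (1 / 2) * (star ψ₂ ⬝ᵥ ((1 - A) *ᵥ ψ₂)).re
      = 1 / 2 + (2 * p - 1) / 2 * ((A 0 0).re - (A 1 1).re) := by
    subst hψ₁ hψ₂
    generalize Complex.exp (φ * Complex.I) = u at hu
    generalize Real.sqrt p = a at ha
    generalize Real.sqrt (1 - p) = b at hb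
    simp [dotProduct, mulVec, Fin.sum_univ_two]
    -- The norm relation `hu` is needed only on the terms carrying `|u|²`.
    linear_combination (1 / 2 * (b ^ 2 * (A 1 1).re + a ^ 2 * (1 - (A 1 1).re))) * hu
      + 1 / 2 * ((A 0 0).re + 1 - (A 1 1).re) * ha
      + 1 / 2 * (1 - (A 0 0).re + (A 1 1).re) * hb
  rw [key]
  nlinarith [mul_nonneg (by linarith : (0 : ℝ) ≤ 2 * p - 1)
    (by linarith : 0 ≤ 1 - ((A 0 0).re - (A 1 1).re))]
end
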